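/- (Mikusiński) Let f, g : I → ℝ be strictly monotone and twice continuously differentiable with f'(x) ≠ 0 and g'(x) ≠ 0 for all x ∈ I. Then A^[f] ≤ A^[g] if and only if f''(x)/f'(x) ≤ g''(x)/g'(x) for all x ∈ I. -/

import Mathlib

/-!
Where `g` is increasing, `A^[f](a) ≤ A^[g](a)` says that `φ (avg (f aᵢ)) ≤ avg (φ (f aᵢ))` for
`φ = g ∘ f⁻¹`. So `A^[f] ≤ A^[g]` is Jensen's inequality for `φ` with equal weights, which for
continuous `φ` is the same as convexity of `φ` on `f(I)`. Differentiating the relation `φ ∘ f = g`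
twice gives `φ'' ∘ f = (g' / f' ^ 2) * (g'' / g' - f'' / f')`, whose sign is that of the second
factor. If `g` is decreasing, replace it by `-g`: neither `A^[g]` nor `g'' / g'` changes.
-/

open Set Function Filter

/-- The quasi-arithmetic mean generated by `f` on the interval `I`,
applied to a vector `a ∈ Iⁿ`: `f⁻¹((f a₁ + ⋯ + f aₙ)/n)`, where the
inverse of `f` is taken on `I`. -/
noncomputable def qam (I : Set ℝ) (f : ℝ → ℝ) {n : ℕ} (a : Fin n → ℝ) : ℝ :=
  Function.invFunOn f I ((∑ i, f (a i)) / n)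

/-- The natural (pointwise) partial order on quasi-arithmetic means:
`A^[f] ≤ A^[g]` iff `A^[f](a) ≤ A^[g](a)` for every `n ≥ 1` and every `a ∈ Iⁿ`. -/
def qamLE (I : Set ℝ) (f g : ℝ → ℝ) : Prop :=
  ∀ n : ℕ, 1 ≤ n → ∀ a : Fin n → ℝ, (∀ i, a i ∈ I) → qam I f a ≤ qam I g a

/-- `A^[f] = A^[g]` : equality of the two quasi-arithmetic means as means. -/
def qamEQ (I : Set ℝ) (f g : ℝ → ℝ) : Prop :=
  ∀ n : ℕ, 1 ≤ n → ∀ a : Fin n → ℝ, (∀ i, a i ∈ I) → qam I f a = qam I g a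

/-- `f` is strictly monotone on `I` (strictly increasing or strictly decreasing). -/
def StrictMonoOrAntiOn (f : ℝ → ℝ) (I : Set ℝ) : Prop :=
  StrictMonoOn f I ∨ StrictAntiOn f I

lemma nonpos_of_map_midpoint_le {a b : ℝ} {ψ : ℝ → ℝ} (hψ : ContinuousOn ψ (Icc a b))
    (ha : ψ a ≤ 0) (hb : ψ b ≤ 0)
    (hmid : ∀ s ∈ Icc a b, ∀ t ∈ Icc a b, ψ (midpoint ℝ s t) ≤ midpoint ℝ (ψ s) (ψ t))
    {t : ℝ} (ht : t ∈ Icc a b) : ψ t ≤ 0 := by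
  obtain ⟨c, hc, hmax⟩ := isCompact_Icc.exists_isMaxOn ⟨t, ht⟩ hψ
  refine (hmax ht).trans ?_
  -- The maximum point `c` is the midpoint of the nearer endpoint and its reflection in `c`.
  have hrefl : ∀ e ∈ Icc a b, ψ e ≤ 0 → 2 * c - e ∈ Icc a b → ψ c ≤ 0 := by
    intro e he hψe he'
    have h := hmid e he _ he'
    have hmax' : ψ (2 * c - e) ≤ ψ c := hmax he'
    rw [midpoint_eq_smul_add, midpoint_eq_smul_add, add_sub_cancel, smul_eq_mul, smul_eq_mul,
      invOf_eq_inv, inv_mul_cancel_left₀ two_ne_zero] at h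
    linarith
  obtain ⟨hac, hcb⟩ := hc
  rcases le_total (c - a) (b - c) with h | h
  · exact hrefl a ⟨le_rfl, hac.trans hcb⟩ ha ⟨by linarith, by linarith⟩
  · exact hrefl b ⟨hac.trans hcb, le_rfl⟩ hb ⟨by linarith, by linarith⟩

theorem convexOn_of_map_midpoint_le {E : Type*} [AddCommGroup E] [Module ℝ E] [TopologicalSpace E]
    [IsTopologicalAddGroup E] [ContinuousSMul ℝ E] {s : Set E} {φ : E → ℝ} (hs : Convex ℝ s)
    (hφ : ContinuousOn φ s)
    (hmid : ∀ x ∈ s, ∀ y ∈ s, φ (midpoint ℝ x y) ≤ midpoint ℝ (φ x) (φ y)) :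
    ConvexOn ℝ s φ := by
  refine convexOn_iff_forall_pos.2 ⟨hs, fun x hx y hy p q hp hq hpq => ?_⟩
  have hline : ∀ t ∈ Icc (0 : ℝ) 1, AffineMap.lineMap x y t ∈ s := fun t ht =>
    hs.lineMap_mem hx hy ht
  -- The excess of `φ` over its chord is again midpoint convex, and vanishes at both ends.
  let ψ : ℝ → ℝ := fun t => φ (AffineMap.lineMap x y t) - AffineMap.lineMap (φ x) (φ y) t
  have hψ : ContinuousOn ψ (Icc 0 1) := (hφ.comp (by fun_prop) hline).sub (by fun_prop)
  have hψmid : ∀ t ∈ Icc (0 : ℝ) 1, ∀ u ∈ Icc (0 : ℝ) 1,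
      ψ (midpoint ℝ t u) ≤ midpoint ℝ (ψ t) (ψ u) := by
    intro t ht u hu
    simp only [ψ, AffineMap.map_midpoint]
    exact (sub_le_sub_right (hmid _ (hline t ht) _ (hline u hu)) _).trans_eq
      (midpoint_vsub_midpoint (V := ℝ) (P := ℝ) (φ _) (φ _) _ _)
  have hψq : ψ q ≤ 0 := nonpos_of_map_midpoint_le hψ (by simp [ψ]) (by simp [ψ]) hψmid
    ⟨hq.le, by linarith⟩
  simpa only [ψ, AffineMap.lineMap_apply_module, ← hpq, add_sub_cancel_right, sub_nonpos]
    using hψq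

lemma ordConnected_image_of_continuousOn {α β : Type*} [ConditionallyCompleteLinearOrder α]
    [TopologicalSpace α] [OrderTopology α] [DenselyOrdered α] [LinearOrder β] [TopologicalSpace β]
    [OrderClosedTopology β] {s : Set α} (hs : s.OrdConnected) {f : α → β} (hf : ContinuousOn f s) :
    (f '' s).OrdConnected :=
  (hs.isPreconnected.image f hf).ordConnected

lemma continuousOn_invFunOn_of_strictMonoOn {α β : Type*} [Nonempty α] [LinearOrder α]
    [TopologicalSpace α] [OrderTopology α] [LinearOrder β] [TopologicalSpace β] [OrderTopology β]
    {s : Set α} {f : α → β} (hf : StrictMonoOn f s) (hs : s.OrdConnected)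
    (hfs : (f '' s).OrdConnected) : ContinuousOn (invFunOn f s) (f '' s) := by
  rw [continuousOn_iff_continuous_domRestrict]
  convert continuous_subtype_val.comp (hf.orderIso f s).symm.continuous using 1
  ext ⟨_, x, hx, rfl⟩
  have hsymm : (hf.orderIso f s).symm ⟨f x, x, hx, rfl⟩ = ⟨x, hx⟩ :=
    (hf.orderIso f s).symm_apply_apply ⟨x, hx⟩
  simp [hsymm, hf.injOn.leftInvOn_invFunOn hx]

lemma continuousOn_invFunOn_of_strictAntiOn {α β : Type*} [Nonempty α] [LinearOrder α]
    [TopologicalSpace α] [OrderTopology α] [LinearOrder β] [TopologicalSpace β] [OrderTopology β]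
    {s : Set α} {f : α → β} (hf : StrictAntiOn f s) (hs : s.OrdConnected)
    (hfs : (f '' s).OrdConnected) : ContinuousOn (invFunOn f s) (f '' s) :=
  continuousOn_invFunOn_of_strictMonoOn (β := βᵒᵈ) hf.dual_right hs hfs.dual

lemma hasDerivWithinAt_comp_invFunOn {𝕜 : Type*} [NontriviallyNormedField 𝕜] {s : Set 𝕜}
    {f g : 𝕜 → 𝕜} {x f' g' : 𝕜} (hinj : InjOn f s)
    (hcont : ContinuousWithinAt (invFunOn f s) (f '' s) (f x)) (hx : x ∈ s)
    (hf : HasDerivWithinAt f f' s x) (hf' : f' ≠ 0) (hg : HasDerivWithinAt g g' s x) :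
    HasDerivWithinAt (g ∘ invFunOn f s) (g' / f') (f '' s) (f x) := by
  have hxinv : invFunOn f s (f x) = x := hinj.leftInvOn_invFunOn hx
  have hmaps : MapsTo (invFunOn f s) (f '' s) s := fun y hy => invFunOn_mem hy
  have hinv : HasDerivWithinAt (invFunOn f s) f'⁻¹ (f '' s) (f x) := by
    rw [← hxinv] at hf
    refine (hf.hasFDerivWithinAt.of_comp_of_leftInverse (f'symm := .toSpanSingleton 𝕜 f'⁻¹)
      (hcont.tendsto_nhdsWithin hmaps) (hasFDerivWithinAt_id _ _) ?_ (fun _ => by simp [hf'])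
      (mem_image_of_mem f hx)).hasDerivWithinAt.congr_deriv (by simp)
    exact eventually_mem_nhdsWithin.mono fun y hy => invFunOn_eq hy
  rw [div_eq_mul_inv]
  exact HasDerivWithinAt.comp (f x) (by rwa [hxinv]) hinv hmaps

lemma invFunOn_neg_apply_neg {α β : Type*} [Nonempty α] [InvolutiveNeg β] (f : α → β) (s : Set α)
    (y : β) : invFunOn (-f) s (-y) = invFunOn f s y := by
  have h : (fun x => x ∈ s ∧ (-f) x = -y) = fun x => x ∈ s ∧ f x = y := by
    simp only [Pi.neg_apply, neg_inj]
  unfold invFunOn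
  rw [h]

lemma StrictMonoOrAntiOn.injOn {f : ℝ → ℝ} {I : Set ℝ} (hf : StrictMonoOrAntiOn f I) :
    InjOn f I :=
  hf.elim StrictMonoOn.injOn StrictAntiOn.injOn

lemma StrictMonoOrAntiOn.continuousOn_invFunOn {f : ℝ → ℝ} {I : Set ℝ}
    (hf : StrictMonoOrAntiOn f I) (hI : I.OrdConnected) (hfI : (f '' I).OrdConnected) :
    ContinuousOn (invFunOn f I) (f '' I) :=
  hf.elim (continuousOn_invFunOn_of_strictMonoOn · hI hfI)
    (continuousOn_invFunOn_of_strictAntiOn · hI hfI)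

section Mean

variable {I : Set ℝ} {f g : ℝ → ℝ} {n : ℕ} {a : Fin n → ℝ}

lemma sum_div_mem_image (hI : I.OrdConnected) (hf : ContinuousOn f I) (hn : 1 ≤ n)
    (ha : ∀ i, a i ∈ I) : (∑ i, f (a i)) / n ∈ f '' I := by
  have hmem := (ordConnected_image_of_continuousOn hI hf).convex.sum_mem (t := Finset.univ)
    (w := fun _ : Fin n => (n : ℝ)⁻¹) (z := fun i => f (a i)) (fun _ _ => by positivity)
    (by simp [show n ≠ 0 by lia]) (fun i _ => mem_image_of_mem f (ha i))
  simpa [← Finset.mul_sum, div_eq_inv_mul] using hmem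

lemma qam_mem (hI : I.OrdConnected) (hf : ContinuousOn f I) (hn : 1 ≤ n) (ha : ∀ i, a i ∈ I) :
    qam I f a ∈ I :=
  invFunOn_mem (sum_div_mem_image hI hf hn ha)

lemma map_qam (hI : I.OrdConnected) (hf : ContinuousOn f I) (hn : 1 ≤ n) (ha : ∀ i, a i ∈ I) :
    f (qam I f a) = (∑ i, f (a i)) / n :=
  invFunOn_eq (sum_div_mem_image hI hf hn ha)

lemma qam_neg (I : Set ℝ) (f : ℝ → ℝ) (a : Fin n → ℝ) : qam I (-f) a = qam I f a := by
  simp only [qam, Pi.neg_apply, Finset.sum_neg_distrib, neg_div, invFunOn_neg_apply_neg]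

lemma qamLE_neg_right : qamLE I f (-g) ↔ qamLE I f g := by
  simp only [qamLE, qam_neg]

lemma qam_le_qam_iff (hI : I.OrdConnected) (hf : ContinuousOn f I) (hg : ContinuousOn g I)
    (hgm : StrictMonoOn g I) (hn : 1 ≤ n) (ha : ∀ i, a i ∈ I) :
    qam I f a ≤ qam I g a ↔ g (qam I f a) ≤ (∑ i, g (a i)) / n := by
  rw [← hgm.le_iff_le (qam_mem hI hf hn ha) (qam_mem hI hg hn ha), map_qam hI hg hn ha]

theorem qamLE_iff_convexOn_comp_invFunOn (hI : I.OrdConnected) (hf : ContinuousOn f I)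
    (hfm : StrictMonoOrAntiOn f I) (hg : ContinuousOn g I) (hgm : StrictMonoOn g I) :
    qamLE I f g ↔ ConvexOn ℝ (f '' I) (g ∘ invFunOn f I) := by
  have hinv : ∀ x ∈ I, invFunOn f I (f x) = x := hfm.injOn.leftInvOn_invFunOn
  constructor
  · intro hle
    have hfI := ordConnected_image_of_continuousOn hI hf
    refine convexOn_of_map_midpoint_le hfI.convex
      (hg.comp (hfm.continuousOn_invFunOn hI hfI) fun y hy => invFunOn_mem hy) ?_
    rintro _ ⟨x, hx, rfl⟩ _ ⟨y, hy, rfl⟩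
    have hxy : ∀ i, ![x, y] i ∈ I := Fin.forall_fin_two.2 ⟨hx, hy⟩
    have hmean := (qam_le_qam_iff hI hf hg hgm one_le_two hxy).1 (hle 2 one_le_two _ hxy)
    simpa [qam, midpoint_eq_smul_add, hinv x hx, hinv y hy, div_eq_inv_mul] using hmean
  · intro hconv n hn a ha
    have hjensen := hconv.map_sum_le (t := Finset.univ) (w := fun _ : Fin n => (n : ℝ)⁻¹)
      (p := fun i => f (a i)) (fun _ _ => by positivity) (by simp [show n ≠ 0 by lia])
      (fun i _ => mem_image_of_mem f (ha i))
    refine (qam_le_qam_iff hI hf hg hgm hn ha).2 ?_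
    simpa [qam, ← Finset.mul_sum, hinv _ (ha _), div_eq_inv_mul] using hjensen

end Mean

theorem convexOn_iff_hasDerivWithinAt2_nonneg {D : Set ℝ} (hD : Convex ℝ D) (hD' : D.Nontrivial)
    {φ φ' φ'' : ℝ → ℝ} (hφ : ∀ x ∈ D, HasDerivWithinAt φ (φ' x) D x)
    (hφ' : ∀ x ∈ D, HasDerivWithinAt φ' (φ'' x) D x) :
    ConvexOn ℝ D φ ↔ ∀ x ∈ D, 0 ≤ φ'' x := by
  constructor
  · intro hconv x hx
    have hunique : UniqueDiffOn ℝ D :=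
      uniqueDiffOn_convex hD (hD.nontrivial_iff_nonempty_interior.1 hD')
    have hmono : MonotoneOn φ' D :=
      (hconv.monotoneOn_derivWithin fun y hy => (hφ y hy).differentiableWithinAt).congr
        fun y hy => (hφ y hy).derivWithin (hunique y hy)
    rw [← (hφ' x hx).derivWithin (hunique x hx)]
    exact hmono.derivWithin_nonneg
  · intro hnonneg
    exact convexOn_of_hasDerivWithinAt2_nonneg hD (fun x hx => (hφ x hx).continuousWithinAt)
      (fun x hx => (hφ x (interior_subset hx)).mono interior_subset)
      (fun x hx => (hφ' x (interior_subset hx)).mono interior_subset)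
      (fun x hx => hnonneg x (interior_subset hx))

lemma StrictMonoOrAntiOn.of_hasDerivWithinAt_ne_zero {I : Set ℝ} (hI : I.OrdConnected)
    {f f' : ℝ → ℝ} (hf : ∀ x ∈ I, HasDerivWithinAt f (f' x) I x) (hf' : ∀ x ∈ I, f' x ≠ 0) :
    StrictMonoOrAntiOn f I := by
  have hcont : ContinuousOn f I := fun x hx => (hf x hx).continuousWithinAt
  have hint : ∀ x ∈ interior I, HasDerivWithinAt f (f' x) (interior I) x := fun x hx =>
    (hf x (interior_subset hx)).mono interior_subset
  rcases hasDerivWithinAt_forall_lt_or_forall_gt_of_forall_ne hI.convex hf hf' with hneg | hpos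
  · exact .inr (strictAntiOn_of_hasDerivWithinAt_neg hI.convex hcont hint
      fun x hx => hneg x (interior_subset hx))
  · exact .inl (strictMonoOn_of_hasDerivWithinAt_pos hI.convex hcont hint
      fun x hx => hpos x (interior_subset hx))

theorem convexOn_comp_invFunOn_iff {I : Set ℝ} (hI : I.OrdConnected) (hI' : I.Nontrivial)
    {f g f' g' f'' g'' : ℝ → ℝ}
    (hf : ∀ x ∈ I, HasDerivWithinAt f (f' x) I x) (hf' : ∀ x ∈ I, HasDerivWithinAt f' (f'' x) I x)
    (hg : ∀ x ∈ I, HasDerivWithinAt g (g' x) I x) (hg' : ∀ x ∈ I, HasDerivWithinAt g' (g'' x) I x)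
    (hf0 : ∀ x ∈ I, f' x ≠ 0) :
    ConvexOn ℝ (f '' I) (g ∘ invFunOn f I) ↔
      ∀ x ∈ I, 0 ≤ (g'' x * f' x - g' x * f'' x) / f' x ^ 3 := by
  have hfm := StrictMonoOrAntiOn.of_hasDerivWithinAt_ne_zero hI hf hf0
  have hfI : (f '' I).OrdConnected :=
    ordConnected_image_of_continuousOn hI fun x hx => (hf x hx).continuousWithinAt
  have hxinv : ∀ x ∈ I, invFunOn f I (f x) = x := hfm.injOn.leftInvOn_invFunOn
  have hchain : ∀ {h h' : ℝ → ℝ}, (∀ x ∈ I, HasDerivWithinAt h (h' x) I x) →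
      ∀ y ∈ f '' I, HasDerivWithinAt (h ∘ invFunOn f I)
        (((fun x => h' x / f' x) ∘ invFunOn f I) y) (f '' I) y := by
    rintro h h' hh _ ⟨x, hx, rfl⟩
    rw [comp_apply, hxinv x hx]
    exact hasDerivWithinAt_comp_invFunOn hfm.injOn
      (hfm.continuousOn_invFunOn hI hfI _ (mem_image_of_mem f hx)) hx (hf x hx) (hf0 x hx) (hh x hx)
  rw [convexOn_iff_hasDerivWithinAt2_nonneg hfI.convex (hI'.image_of_injOn hfm.injOn) (hchain hg)
    (hchain fun x hx => (hg' x hx).fun_div (hf' x hx) (hf0 x hx)), forall_mem_image]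
  exact forall₂_congr fun x hx => by rw [comp_apply, hxinv x hx, div_div, ← pow_succ]

lemma qamLE_iff_of_deriv_pos {I : Set ℝ} (hI : I.OrdConnected) (hI' : I.Nontrivial)
    {f g f' g' f'' g'' : ℝ → ℝ}
    (hf : ∀ x ∈ I, HasDerivWithinAt f (f' x) I x) (hf' : ∀ x ∈ I, HasDerivWithinAt f' (f'' x) I x)
    (hg : ∀ x ∈ I, HasDerivWithinAt g (g' x) I x) (hg' : ∀ x ∈ I, HasDerivWithinAt g' (g'' x) I x)
    (hf0 : ∀ x ∈ I, f' x ≠ 0) (hg0 : ∀ x ∈ I, 0 < g' x) :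
    qamLE I f g ↔ ∀ x ∈ I, f'' x / f' x ≤ g'' x / g' x := by
  have hfc : ContinuousOn f I := fun x hx => (hf x hx).continuousWithinAt
  have hgc : ContinuousOn g I := fun x hx => (hg x hx).continuousWithinAt
  have hfm := StrictMonoOrAntiOn.of_hasDerivWithinAt_ne_zero hI hf hf0
  have hgm : StrictMonoOn g I := strictMonoOn_of_hasDerivWithinAt_pos hI.convex hgc
    (fun x hx => (hg x (interior_subset hx)).mono interior_subset)
    (fun x hx => hg0 x (interior_subset hx))
  rw [qamLE_iff_convexOn_comp_invFunOn hI hfc hfm hgc hgm,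
    convexOn_comp_invFunOn_iff hI hI' hf hf' hg hg' hf0]
  refine forall₂_congr fun x hx => ?_
  have hf0x := hf0 x hx
  have hg0x := hg0 x hx
  have hfactor : (g'' x * f' x - g' x * f'' x) / f' x ^ 3 =
      g' x / f' x ^ 2 * (g'' x / g' x - f'' x / f' x) := by field_simp
  have hscale : 0 < g' x / f' x ^ 2 := by positivity
  rw [hfactor, mul_nonneg_iff_of_pos_left hscale, sub_nonneg]

theorem qam_le_iff_mikusinski_general {I : Set ℝ} (hI : I.OrdConnected) (hI' : I.Nontrivial)
    {f g f' g' f'' g'' : ℝ → ℝ}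
    (hf : ∀ x ∈ I, HasDerivWithinAt f (f' x) I x) (hf' : ∀ x ∈ I, HasDerivWithinAt f' (f'' x) I x)
    (hg : ∀ x ∈ I, HasDerivWithinAt g (g' x) I x) (hg' : ∀ x ∈ I, HasDerivWithinAt g' (g'' x) I x)
    (hf0 : ∀ x ∈ I, f' x ≠ 0) (hg0 : ∀ x ∈ I, g' x ≠ 0) :
    qamLE I f g ↔ ∀ x ∈ I, f'' x / f' x ≤ g'' x / g' x := by
  rcases hasDerivWithinAt_forall_lt_or_forall_gt_of_forall_ne hI.convex hg hg0 with hneg | hpos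
  · simpa only [qamLE_neg_right, neg_div_neg_eq] using
      qamLE_iff_of_deriv_pos (g := -g) hI hI' hf hf' (fun x hx => (hg x hx).neg)
        (fun x hx => (hg' x hx).fun_neg) hf0 fun x hx => neg_pos.2 (hneg x hx)
  · exact qamLE_iff_of_deriv_pos hI hI' hf hf' hg hg' hf0 hpos

/-- Mikusiński: for twice continuously differentiable, strictly
monotone `f, g` with nonvanishing first derivatives,
`A^[f] ≤ A^[g]` iff `f''/f' ≤ g''/g'` on `I`. -/
theorem qam_le_iff_mikusinski
    (I : Set ℝ) (hI : I.OrdConnected) (hInontriv : ∃ x ∈ I, ∃ y ∈ I, x < y)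
    (f g f' g' f'' g'' : ℝ → ℝ)
    (hfd : ∀ x ∈ I, HasDerivWithinAt f (f' x) I x)
    (hfd2 : ∀ x ∈ I, HasDerivWithinAt f' (f'' x) I x)
    (hf''c : ContinuousOn f'' I)
    (hgd : ∀ x ∈ I, HasDerivWithinAt g (g' x) I x)
    (hgd2 : ∀ x ∈ I, HasDerivWithinAt g' (g'' x) I x)
    (hg''c : ContinuousOn g'' I)
    (hf'0 : ∀ x ∈ I, f' x ≠ 0) (hg'0 : ∀ x ∈ I, g' x ≠ 0)
    (hfm : StrictMonoOrAntiOn f I) (hgm : StrictMonoOrAntiOn g I) :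
    qamLE I f g ↔ ∀ x ∈ I, f'' x / f' x ≤ g'' x / g' x := by
  obtain ⟨x, hx, y, hy, hxy⟩ := hInontriv
  exact qam_le_iff_mikusinski_general hI ⟨x, hx, y, hy, hxy.ne⟩ hfd hfd2 hgd hgd2 hf'0 hg'0
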